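/- Let g : [0,T]×ℝⁿ×P×Q → ℝⁿ be continuous, locally Lipschitz in x uniformly in (t,u,v), with linear growth ‖g(t,x,u,v)‖ ≤ (1+‖x‖)c_g, where P ⊂ ℝ^{n_u} and Q ⊂ ℝ^{n_v} are compact. Then for every x₀ ∈ B(R₀) and all measurable realizations u : [0,T) → P, v : [0,T) → Q, there exists a unique motion x(·) ∈ {x₀}+I^α(L^∞) satisfying (^C D^α x)(t) = g(t,x(t),u(t),v(t)) a.e. Moreover there exist R̄ > 0 and H̄ > 0 independent of x₀, u(·), v(·) such that ‖x(t)‖ ≤ R̄ and ‖x(t) − x(τ)‖ ≤ H̄ |t−τ|^α for all t, τ ∈ [0,T]. -/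

import Mathlib

open MeasureTheory Set Real RealInnerProductSpace

noncomputable section

abbrev Evec (n : ℕ) := EuclideanSpace ℝ (Fin n)

/-- Generalized binomial coefficient `binom a j`. -/
def binomR (a : ℝ) (j : ℕ) : ℝ :=
  (∏ i ∈ Finset.range j, (a - (i : ℝ))) / (Nat.factorial j : ℝ)

/-- Left-sided Riemann–Liouville fractional integral of order `α` with base point `0`. -/
def RLint {E : Type*} [NormedAddCommGroup E] [NormedSpace ℝ E]
    (α : ℝ) (f : ℝ → E) (t : ℝ) : E :=
  (Real.Gamma α)⁻¹ • ∫ τ in (0:ℝ)..t, ((t - τ) ^ (α - 1) : ℝ) • f τ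

/-- Left-sided Riemann–Liouville fractional derivative of order `α` with base point `0`. -/
def RLderiv {E : Type*} [NormedAddCommGroup E] [NormedSpace ℝ E]
    (α : ℝ) (x : ℝ → E) (t : ℝ) : E :=
  deriv (fun s => (Real.Gamma (1 - α))⁻¹ • ∫ τ in (0:ℝ)..s, ((s - τ) ^ (-α) : ℝ) • x τ) t

/-- Caputo fractional derivative of order `α` with base point `0`. -/
def CapDeriv {E : Type*} [NormedAddCommGroup E] [NormedSpace ℝ E]
    (α : ℝ) (x : ℝ → E) (t : ℝ) : E :=
  RLderiv α (fun s => x s - x 0) t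

/-- Grünwald–Letnikov fractional difference of order `α` with step `h`. -/
def GLdiff {E : Type*} [NormedAddCommGroup E] [NormedSpace ℝ E]
    (α h : ℝ) (x : ℝ → E) (t : ℝ) : E :=
  ∑ j ∈ Finset.range (⌊t / h⌋₊ + 1), ((-1 : ℝ) ^ j * binomR α j) • x (t - (j : ℝ) * h)

/-- The kernel `p_α`. -/
def pker (α : ℝ) (τ : ℝ) : ℝ :=
  (Real.Gamma α)⁻¹ * ∑ j ∈ Finset.range ⌈τ⌉₊, (-1 : ℝ) ^ j * binomR α j * ((τ - (j : ℝ)) ^ (α - 1) : ℝ)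

/-- Mittag-Leffler function `E_α`. -/
def mittagLeffler (α z : ℝ) : ℝ := ∑' k : ℕ, z ^ k / Real.Gamma (α * (k : ℝ) + 1)

/-- `x` is a solution of the Caputo Cauchy problem `(^C D^α x)(t) = f(t, x(t))`, `x 0 = x₀`. -/
def IsCaputoSol (α T : ℝ) {n : ℕ} (f : ℝ → Evec n → Evec n) (x₀ : Evec n)
    (x : ℝ → Evec n) : Prop :=
  (∃ φ : ℝ → Evec n, Measurable φ ∧
    (∃ C : ℝ, ∀ᵐ t ∂volume.restrict (Icc (0:ℝ) T), ‖φ t‖ ≤ C) ∧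
    ∀ t ∈ Icc (0:ℝ) T, x t = x₀ + RLint α φ t) ∧
  ∀ᵐ t ∂volume.restrict (Icc (0:ℝ) T), CapDeriv α x t = f t (x t)

/-- `y` is a solution of the approximating retarded functional-differential Cauchy problem. -/
def IsApproxSol (α T h : ℝ) {n : ℕ} (f : ℝ → Evec n → Evec n) (x₀ : Evec n)
    (y : ℝ → Evec n) : Prop :=
  (∃ Ly : NNReal, LipschitzOnWith Ly y (Icc (0:ℝ) T)) ∧ y 0 = 0 ∧
  ∀ᵐ t ∂volume.restrict (Icc (0:ℝ) T),
    HasDerivAt y (f t (x₀ + ((h ^ (α - 1) : ℝ)) • GLdiff (1 - α) h y t)) t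

/-- `x` is a motion of the conflict-controlled Caputo system for realizations `u`, `v`. -/
def IsCtrlSol (α T : ℝ) {n nu nv : ℕ}
    (g : ℝ → Evec n → Evec nu → Evec nv → Evec n) (x₀ : Evec n)
    (u : ℝ → Evec nu) (v : ℝ → Evec nv) (x : ℝ → Evec n) : Prop :=
  (∃ φ : ℝ → Evec n, Measurable φ ∧
    (∃ C : ℝ, ∀ᵐ t ∂volume.restrict (Icc (0:ℝ) T), ‖φ t‖ ≤ C) ∧
    ∀ t ∈ Icc (0:ℝ) T, x t = x₀ + RLint α φ t) ∧
  ∀ᵐ t ∂volume.restrict (Icc (0:ℝ) T), CapDeriv α x t = g t (x t) (u t) (v t)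

/-- `y` is a motion of the approximating conflict-controlled system for realizations `ũ`, `ṽ`. -/
def IsCtrlApproxSol (α T h : ℝ) {n nu nv : ℕ}
    (g : ℝ → Evec n → Evec nu → Evec nv → Evec n) (x₀ : Evec n)
    (ut : ℝ → Evec nu) (vt : ℝ → Evec nv) (y : ℝ → Evec n) : Prop :=
  (∃ Ly : NNReal, LipschitzOnWith Ly y (Icc (0:ℝ) T)) ∧ y 0 = 0 ∧
  ∀ᵐ t ∂volume.restrict (Icc (0:ℝ) T),
    HasDerivAt y (g t (x₀ + ((h ^ (α - 1) : ℝ)) • GLdiff (1 - α) h y t) (ut t) (vt t)) t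

/-
With the exponential weight `exp (k t)` the fractional integral `I^α` becomes a small operator:
`I^α (exp (k ·)) ≤ k ^ (-α) exp (k ·)`, by comparison with the Gamma integral. Choosing `k` large
turns the integral equation `x = x₀ + I^α f(·, x)` into a contraction on a set of exponentially
bounded paths, and the same weight proves a fractional Gronwall inequality, which gives uniqueness
and an a priori bound. The integral equation is equivalent to the Caputo equation because
`I^(1-α) I^α = I^1`, an instance of the Beta integral combined with Fubini, and the Hölder bound
is the estimate `∫ |k_α(t - s) - k_α(τ - s)| ds ≤ 2 |t - τ|^α / Γ(α + 1)` for the kernel `k_α` of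
`I^α`.
-/

/-- The kernel `t₊ ^ (α - 1) / Γ(α)` of fractional integration. Extending it by `0` to `t ≤ 0` lets
Riemann–Liouville integrals up to different times be written over one common interval. -/
def rlKernel (α : ℝ) : ℝ → ℝ :=
  (Ioi 0).indicator fun t => (Gamma α)⁻¹ * t ^ (α - 1)

section Kernel

variable {α β k s t τ : ℝ}

lemma rlKernel_of_pos (ht : 0 < t) : rlKernel α t = (Gamma α)⁻¹ * t ^ (α - 1) :=
  indicator_of_mem ht _

lemma rlKernel_of_nonpos (ht : t ≤ 0) : rlKernel α t = 0 :=
  indicator_of_notMem (notMem_Ioi.2 ht) _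

lemma rlKernel_pos (hα : 0 < α) (ht : 0 < t) : 0 < rlKernel α t := by
  have := Gamma_pos_of_pos hα
  rw [rlKernel_of_pos ht]
  positivity

lemma rlKernel_nonneg (hα : 0 < α) (t : ℝ) : 0 ≤ rlKernel α t := by
  rcases le_or_gt t 0 with ht | ht
  · exact (rlKernel_of_nonpos ht).ge
  · exact (rlKernel_pos hα ht).le

lemma rlKernel_le_of_le (hα : 0 < α) (hα1 : α ≤ 1) (hs : 0 < s) (hst : s ≤ t) :
    rlKernel α t ≤ rlKernel α s := by
  have := Gamma_pos_of_pos hα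
  rw [rlKernel_of_pos hs, rlKernel_of_pos (hs.trans_le hst)]
  gcongr ?_ * ?_
  exact rpow_le_rpow_of_nonpos hs hst (by linarith)

lemma measurable_rlKernel (α : ℝ) : Measurable (rlKernel α) :=
  Measurable.indicator (by fun_prop) measurableSet_Ioi

lemma intervalIntegrable_rlKernel (hα : 0 < α) (a b : ℝ) :
    IntervalIntegrable (rlKernel α) volume a b := by
  have hpow : IntervalIntegrable (fun t : ℝ => (Gamma α)⁻¹ * t ^ (α - 1)) volume a b :=
    (intervalIntegral.intervalIntegrable_rpow' (by linarith)).const_mul _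
  rw [intervalIntegrable_iff] at hpow ⊢
  exact hpow.indicator measurableSet_Ioi

lemma intervalIntegrable_rlKernel_sub (hα : 0 < α) (t a b : ℝ) :
    IntervalIntegrable (fun s => rlKernel α (t - s)) volume a b := by
  simpa using (intervalIntegrable_rlKernel hα (t - a) (t - b)).comp_sub_left t

lemma integral_rlKernel_sub (hα : 0 < α) {a b : ℝ} (ha : a ≤ t) (hb : b ≤ t) :
    ∫ s in a..b, rlKernel α (t - s) = ((t - a) ^ α - (t - b) ^ α) / Gamma (α + 1) := by
  have hpow : ∫ s in (t - b)..(t - a), rlKernel α s =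
      ∫ s in (t - b)..(t - a), (Gamma α)⁻¹ * s ^ (α - 1) :=
    intervalIntegral.integral_congr_uIoo fun s hs =>
      rlKernel_of_pos ((le_min (sub_nonneg.2 hb) (sub_nonneg.2 ha)).trans_lt hs.1)
  rw [intervalIntegral.integral_comp_sub_left (rlKernel α), hpow,
    intervalIntegral.integral_const_mul, integral_rpow (Or.inl (by linarith)), sub_add_cancel,
    Gamma_add_one hα.ne']
  field_simp

lemma integral_rlKernel_mul_exp_neg (hα : 0 < α) (hk : 0 < k) :
    ∫ s in Ioi 0, rlKernel α s * exp (-(k * s)) = k ^ (-α) := by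
  have := Gamma_pos_of_pos hα
  have hcongr : ∫ s in Ioi 0, rlKernel α s * exp (-(k * s)) =
      ∫ s in Ioi 0, (Gamma α)⁻¹ * (s ^ (α - 1) * exp (-(k * s))) :=
    setIntegral_congr_fun measurableSet_Ioi fun s hs => by
      simp only [rlKernel_of_pos hs, mul_assoc]
  rw [hcongr, integral_const_mul, integral_rpow_mul_exp_neg_mul_Ioi hα hk, one_div,
    inv_rpow hk.le, rpow_neg hk.le]
  field_simp

lemma integral_rlKernel_sub_mul_exp_le (hα : 0 < α) (hk : 0 < k) (ht : 0 ≤ t) :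
    ∫ s in 0..t, rlKernel α (t - s) * exp (k * s) ≤ k ^ (-α) * exp (k * t) := by
  have hint : IntegrableOn (fun s => rlKernel α s * exp (-(k * s))) (Ioi 0) :=
    Integrable.of_integral_ne_zero <| by
      rw [integral_rlKernel_mul_exp_neg hα hk]
      positivity
  calc ∫ s in 0..t, rlKernel α (t - s) * exp (k * s)
      = ∫ s in 0..t, rlKernel α (t - s) * exp (-(k * (t - s))) * exp (k * t) := by
        refine intervalIntegral.integral_congr fun s _ => ?_
        simp only [mul_assoc, ← Real.exp_add]
        ring_nf
    _ = (∫ s in 0..t, rlKernel α s * exp (-(k * s))) * exp (k * t) := by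
        rw [intervalIntegral.integral_mul_const, intervalIntegral.integral_comp_sub_left
          (fun s => rlKernel α s * exp (-(k * s))), sub_self, sub_zero]
    _ ≤ k ^ (-α) * exp (k * t) := by
        gcongr
        rw [← integral_rlKernel_mul_exp_neg hα hk, intervalIntegral.integral_of_le ht]
        exact setIntegral_mono_set hint
          (ae_of_all _ fun s => mul_nonneg (rlKernel_nonneg hα s) (exp_pos _).le)
          Ioc_subset_Ioi_self.eventuallyLE

lemma integral_rpow_mul_sub_rpow (hα : 0 < α) (hβ : 0 < β) (ht : 0 < t) :
    ∫ s in 0..t, s ^ (α - 1) * (t - s) ^ (β - 1) =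
      t ^ (α + β - 1) * (Gamma α * Gamma β / Gamma (α + β)) := by
  have hcongr : ∫ s in 0..t, (s : ℂ) ^ ((α : ℂ) - 1) * ((t : ℂ) - s) ^ ((β : ℂ) - 1) =
      ∫ s in 0..t, ((s ^ (α - 1) * (t - s) ^ (β - 1) : ℝ) : ℂ) := by
    refine intervalIntegral.integral_congr fun s hs => ?_
    rw [uIcc_of_le ht.le] at hs
    push_cast [Complex.ofReal_cpow hs.1, Complex.ofReal_cpow (sub_nonneg.2 hs.2)]
    rfl
  have hscaled := Complex.betaIntegral_scaled α β ht
  rw [hcongr, intervalIntegral.integral_ofReal,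
    Complex.betaIntegral_eq_Gamma_mul_div _ _ (by simpa) (by simpa)] at hscaled
  apply Complex.ofReal_injective
  rw [hscaled]
  push_cast [Complex.ofReal_cpow ht.le, ← Complex.Gamma_ofReal]
  rfl

lemma integral_rlKernel_sub_mul_rlKernel (hα : 0 < α) (hβ : 0 < β) (t : ℝ) :
    ∫ s, rlKernel β (t - s) * rlKernel α s = rlKernel (α + β) t := by
  have hvanish : ∀ s ∉ Ioo 0 t, rlKernel β (t - s) * rlKernel α s = 0 := by
    intro s hs
    rcases le_or_gt s 0 with hs0 | hs0
    · rw [rlKernel_of_nonpos hs0, mul_zero]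
    · rw [rlKernel_of_nonpos (sub_nonpos.2 (not_lt.1 fun h => hs ⟨hs0, h⟩)), zero_mul]
  rw [← setIntegral_eq_integral_of_forall_compl_eq_zero hvanish]
  rcases le_or_gt t 0 with ht | ht
  · rw [Ioo_eq_empty (not_lt.2 ht), setIntegral_empty, rlKernel_of_nonpos ht]
  have := Gamma_pos_of_pos hα
  have := Gamma_pos_of_pos hβ
  have hcongr : ∀ s ∈ Ioo 0 t, rlKernel β (t - s) * rlKernel α s =
      (Gamma α)⁻¹ * (Gamma β)⁻¹ * (s ^ (α - 1) * (t - s) ^ (β - 1)) := fun s hs => by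
    rw [rlKernel_of_pos hs.1, rlKernel_of_pos (sub_pos.2 hs.2)]
    ring
  rw [setIntegral_congr_fun measurableSet_Ioo hcongr, ← integral_Ioc_eq_integral_Ioo,
    ← intervalIntegral.integral_of_le ht.le, intervalIntegral.integral_const_mul,
    integral_rpow_mul_sub_rpow hα hβ ht, rlKernel_of_pos ht]
  field_simp

lemma integrable_rlKernel_sub_mul_rlKernel (hα : 0 < α) (hβ : 0 < β) (ht : 0 < t) :
    Integrable fun s => rlKernel β (t - s) * rlKernel α s :=
  Integrable.of_integral_ne_zero <| by
    rw [integral_rlKernel_sub_mul_rlKernel hα hβ]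
    exact (rlKernel_pos (by positivity) ht).ne'

lemma setIntegral_rlKernel_sub_mul_rlKernel_sub (hα : 0 < α) (hβ : 0 < β) (hτ : 0 ≤ τ) :
    ∫ r in Ioc 0 t, rlKernel β (t - r) * rlKernel α (r - τ) = rlKernel (α + β) (t - τ) := by
  rw [setIntegral_eq_integral_of_forall_compl_eq_zero, ← integral_rlKernel_sub_mul_rlKernel hα hβ,
    ← integral_sub_right_eq_self (fun s => rlKernel β (t - τ - s) * rlKernel α s) τ]
  · simp only [sub_sub_sub_cancel_right]
  · intro r hr
    rcases le_or_gt r 0 with hr0 | hr0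
    · rw [rlKernel_of_nonpos (t := r - τ) (by linarith), mul_zero]
    · rw [rlKernel_of_nonpos (sub_nonpos.2 (not_le.1 fun h => hr ⟨hr0, h⟩).le), zero_mul]

end Kernel

section RiemannLiouville

variable {E : Type*} [NormedAddCommGroup E] [NormedSpace ℝ E]
variable {α β c k t T : ℝ} {φ ψ : ℝ → E}

lemma ae_Ioc_of_ae_restrict_Icc {p : ℝ → Prop} (h : ∀ᵐ s ∂volume.restrict (Icc 0 T), p s)
    {a b : ℝ} (ha : 0 ≤ a) (hb : b ≤ T) : ∀ᵐ s, s ∈ Ioc a b → p s :=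
  (ae_restrict_iff' measurableSet_Ioc).1 <|
    ae_restrict_of_ae_restrict_of_subset (Ioc_subset_Icc_self.trans (Icc_subset_Icc ha hb)) h

lemma RLint_eq_integral_rlKernel {b : ℝ} (ht : 0 ≤ t) (htb : t ≤ b) :
    RLint α φ t = ∫ s in 0..b, rlKernel α (t - s) • φ s := by
  have hindicator : (fun s => rlKernel α (t - s) • φ s) =
      (Iio t).indicator fun s => (Gamma α)⁻¹ • (t - s) ^ (α - 1) • φ s := by
    ext1 s
    by_cases hs : s < t
    · rw [indicator_of_mem (mem_Iio.2 hs), rlKernel_of_pos (sub_pos.2 hs), mul_smul]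
    · rw [indicator_of_notMem (notMem_Iio.2 (not_lt.1 hs)),
        rlKernel_of_nonpos (sub_nonpos.2 (not_lt.1 hs)), zero_smul]
  have hinter : Ioc 0 b ∩ Iio t = Ioo 0 t := by
    ext s
    exact ⟨fun h => ⟨h.1.1, h.2⟩, fun h => ⟨⟨h.1, h.2.le.trans htb⟩, h.2⟩⟩
  rw [RLint, ← intervalIntegral.integral_smul, intervalIntegral.integral_of_le ht,
    intervalIntegral.integral_of_le (ht.trans htb), hindicator,
    setIntegral_indicator measurableSet_Iio, hinter, integral_Ioc_eq_integral_Ioo]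

lemma RLint_zero (α : ℝ) (φ : ℝ → E) : RLint α φ 0 = 0 := by
  simp [RLint]

lemma RLint_one (φ : ℝ → E) (t : ℝ) : RLint 1 φ t = ∫ s in 0..t, φ s := by
  simp [RLint]

lemma RLint_const_mul (α c : ℝ) (w : ℝ → ℝ) (t : ℝ) :
    RLint α (fun s => c * w s) t = c * RLint α w t := by
  simp only [RLint, smul_eq_mul, mul_left_comm _ c, intervalIntegral.integral_const_mul]

lemma RLint_congr (ht : 0 ≤ t) (h : EqOn φ ψ (Icc 0 t)) : RLint α φ t = RLint α ψ t := by
  rw [RLint, RLint, intervalIntegral.integral_congr fun s hs => ?_]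
  rw [uIcc_of_le ht] at hs
  simp only [h hs]

lemma RLint_sub (ht : 0 ≤ t)
    (hφ : IntervalIntegrable (fun s => rlKernel α (t - s) • φ s) volume 0 t)
    (hψ : IntervalIntegrable (fun s => rlKernel α (t - s) • ψ s) volume 0 t) :
    RLint α (fun s => φ s - ψ s) t = RLint α φ t - RLint α ψ t := by
  simp only [RLint_eq_integral_rlKernel ht le_rfl, smul_sub]
  exact intervalIntegral.integral_sub hφ hψ

lemma intervalIntegrable_rlKernel_sub_smul (hα : 0 < α)
    (hφ : AEStronglyMeasurable φ (volume.restrict (Icc 0 T)))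
    (hc : ∀ᵐ s ∂volume.restrict (Icc 0 T), ‖φ s‖ ≤ c) (t : ℝ) {b : ℝ} (hb : b ∈ Icc 0 T) :
    IntervalIntegrable (fun s => rlKernel α (t - s) • φ s) volume 0 b := by
  have hint : IntegrableOn (fun s => rlKernel α (t - s) • φ s) (Icc 0 T) := by
    have hker : IntegrableOn (fun s => rlKernel α (t - s)) (Icc 0 T) := by
      rw [integrableOn_Icc_iff_integrableOn_Ioc,
        ← intervalIntegrable_iff_integrableOn_Ioc_of_le (hb.1.trans hb.2)]
      exact intervalIntegrable_rlKernel_sub hα t 0 T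
    refine (hker.mul_const c).mono' (hker.aestronglyMeasurable.smul hφ) ?_
    filter_upwards [hc] with s hs
    rw [norm_smul, Real.norm_of_nonneg (rlKernel_nonneg hα _)]
    exact mul_le_mul_of_nonneg_left hs (rlKernel_nonneg hα _)
  refine (hint.mono_set ?_).intervalIntegrable
  rw [uIcc_of_le hb.1]
  exact Icc_subset_Icc_right hb.2

lemma intervalIntegrable_rlKernel_sub_mul (hα : 0 < α) {m : ℝ → ℝ}
    (hm : ContinuousOn m (Icc 0 T)) (ht : t ∈ Icc 0 T) :
    IntervalIntegrable (fun s => rlKernel α (t - s) * m s) volume 0 t := by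
  refine (intervalIntegrable_rlKernel_sub hα t 0 t).mul_continuousOn (hm.mono ?_)
  rw [uIcc_of_le ht.1]
  exact Icc_subset_Icc_right ht.2

lemma norm_RLint_le (hα : 0 < α) (ht : t ∈ Icc 0 T) {m : ℝ → ℝ}
    (hm : IntervalIntegrable (fun s => rlKernel α (t - s) * m s) volume 0 t)
    (hφm : ∀ᵐ s ∂volume.restrict (Icc 0 T), ‖φ s‖ ≤ m s) :
    ‖RLint α φ t‖ ≤ RLint α m t := by
  rw [RLint_eq_integral_rlKernel ht.1 le_rfl, RLint_eq_integral_rlKernel ht.1 le_rfl]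
  refine intervalIntegral.norm_integral_le_of_norm_le ht.1 ?_ hm
  filter_upwards [ae_Ioc_of_ae_restrict_Icc hφm le_rfl ht.2] with s hs hst
  rw [norm_smul, Real.norm_of_nonneg (rlKernel_nonneg hα _)]
  exact mul_le_mul_of_nonneg_left (hs hst) (rlKernel_nonneg hα _)

lemma norm_RLint_le_of_norm_le_exp (hα : 0 < α) (hk : 0 < k) (hc : 0 ≤ c) (ht : t ∈ Icc 0 T)
    (hφ : ∀ᵐ s ∂volume.restrict (Icc 0 T), ‖φ s‖ ≤ c * exp (k * s)) :
    ‖RLint α φ t‖ ≤ c * k ^ (-α) * exp (k * t) := by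
  calc ‖RLint α φ t‖
      ≤ RLint α (fun s => c * exp (k * s)) t :=
        norm_RLint_le hα ht (intervalIntegrable_rlKernel_sub_mul hα (by fun_prop) ht) hφ
    _ = c * ∫ s in 0..t, rlKernel α (t - s) * exp (k * s) := by
        rw [RLint_const_mul, RLint_eq_integral_rlKernel ht.1 le_rfl]
        simp only [smul_eq_mul]
    _ ≤ c * (k ^ (-α) * exp (k * t)) := by
        gcongr
        exact integral_rlKernel_sub_mul_exp_le hα hk ht.1
    _ = c * k ^ (-α) * exp (k * t) := by ring

lemma norm_RLint_sub_RLint_le_of_norm_sub_le_exp {C D : ℝ} (hα : 0 < α) (hk : 0 < k) (hc : 0 ≤ c)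
    (hφ : AEStronglyMeasurable φ (volume.restrict (Icc 0 T)))
    (hC : ∀ᵐ s ∂volume.restrict (Icc 0 T), ‖φ s‖ ≤ C)
    (hψ : AEStronglyMeasurable ψ (volume.restrict (Icc 0 T)))
    (hD : ∀ᵐ s ∂volume.restrict (Icc 0 T), ‖ψ s‖ ≤ D)
    (hφψ : ∀ᵐ s ∂volume.restrict (Icc 0 T), ‖φ s - ψ s‖ ≤ c * exp (k * s)) (ht : t ∈ Icc 0 T) :
    ‖RLint α φ t - RLint α ψ t‖ ≤ c * k ^ (-α) * exp (k * t) := by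
  rw [← RLint_sub ht.1 (intervalIntegrable_rlKernel_sub_smul hα hφ hC t ht)
    (intervalIntegrable_rlKernel_sub_smul hα hψ hD t ht)]
  exact norm_RLint_le_of_norm_le_exp hα hk hc ht hφψ

lemma integrable_rlKernel_mul_rlKernel_smul (hα : 0 < α) (hβ : 0 < β)
    (hφ : AEStronglyMeasurable φ (volume.restrict (Ioc 0 t)))
    (hint : IntegrableOn (fun s => rlKernel (α + β) (t - s) • φ s) (Ioc 0 t)) :
    Integrable (fun p : ℝ × ℝ => (rlKernel β (t - p.1) * rlKernel α (p.1 - p.2)) • φ p.2)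
      ((volume.restrict (Ioc 0 t)).prod (volume.restrict (Ioc 0 t))) := by
  have hker : Measurable fun p : ℝ × ℝ => rlKernel β (t - p.1) * rlKernel α (p.1 - p.2) :=
    ((measurable_rlKernel β).comp (by fun_prop)).mul ((measurable_rlKernel α).comp (by fun_prop))
  have hnonneg (r τ : ℝ) : 0 ≤ rlKernel β (t - r) * rlKernel α (r - τ) :=
    mul_nonneg (rlKernel_nonneg hβ _) (rlKernel_nonneg hα _)
  have hmeas : AEStronglyMeasurable
      (fun p : ℝ × ℝ => (rlKernel β (t - p.1) * rlKernel α (p.1 - p.2)) • φ p.2)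
      ((volume.restrict (Ioc 0 t)).prod (volume.restrict (Ioc 0 t))) :=
    hker.aestronglyMeasurable.smul hφ.comp_snd
  rw [integrable_prod_iff' hmeas]
  refine ⟨?_, hint.norm.congr ?_⟩
  · rw [restrict_Ioo_eq_restrict_Ioc.symm, ae_restrict_iff' measurableSet_Ioo]
    refine ae_of_all _ fun τ hτ => Integrable.smul_const (𝕜 := ℝ)
      (f := fun r => rlKernel β (t - r) * rlKernel α (r - τ)) (Integrable.restrict ?_) (φ τ)
    simpa using (integrable_rlKernel_sub_mul_rlKernel hα hβ (sub_pos.2 hτ.2)).comp_sub_right τ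
  · filter_upwards [ae_restrict_mem measurableSet_Ioc] with τ hτ
    simp only [norm_smul, Real.norm_of_nonneg (hnonneg _ _), integral_mul_const,
      setIntegral_rlKernel_sub_mul_rlKernel_sub hα hβ hτ.1.le]
    rw [Real.norm_of_nonneg (rlKernel_nonneg (by positivity) _)]

theorem RLint_RLint [CompleteSpace E] (hα : 0 < α) (hβ : 0 < β) (ht : 0 ≤ t)
    (hφ : AEStronglyMeasurable φ (volume.restrict (Ioc 0 t)))
    (hint : IntegrableOn (fun s => rlKernel (α + β) (t - s) • φ s) (Ioc 0 t)) :
    RLint β (RLint α φ) t = RLint (α + β) φ t := by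
  calc RLint β (RLint α φ) t
      = ∫ r in Ioc 0 t, ∫ τ in Ioc 0 t, (rlKernel β (t - r) * rlKernel α (r - τ)) • φ τ := by
        rw [RLint_eq_integral_rlKernel ht le_rfl, intervalIntegral.integral_of_le ht]
        refine setIntegral_congr_fun measurableSet_Ioc fun r hr => ?_
        simp only [RLint_eq_integral_rlKernel hr.1.le hr.2, intervalIntegral.integral_of_le ht,
          mul_smul, integral_smul]
    _ = ∫ τ in Ioc 0 t, ∫ r in Ioc 0 t, (rlKernel β (t - r) * rlKernel α (r - τ)) • φ τ :=
        integral_integral_swap (integrable_rlKernel_mul_rlKernel_smul hα hβ hφ hint)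
    _ = RLint (α + β) φ t := by
        rw [RLint_eq_integral_rlKernel ht le_rfl, intervalIntegral.integral_of_le ht]
        refine setIntegral_congr_fun measurableSet_Ioc fun τ hτ => ?_
        simp only [integral_smul_const, setIntegral_rlKernel_sub_mul_rlKernel_sub hα hβ hτ.1.le]

lemma intervalIntegrable_abs_rlKernel_sub_sub (hα : 0 < α) (t τ a b : ℝ) :
    IntervalIntegrable (fun s => |rlKernel α (t - s) - rlKernel α (τ - s)|) volume a b :=
  ((intervalIntegrable_rlKernel_sub hα t a b).sub (intervalIntegrable_rlKernel_sub hα τ a b)).abs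

lemma integral_abs_rlKernel_sub_sub_le (hα : 0 < α) (hα1 : α ≤ 1) {τ : ℝ} (hτ : 0 ≤ τ)
    (hτt : τ ≤ t) :
    ∫ s in 0..t, |rlKernel α (t - s) - rlKernel α (τ - s)| ≤
      2 / Gamma (α + 1) * (t - τ) ^ α := by
  have : 0 < Gamma (α + 1) := Gamma_pos_of_pos (by linarith)
  have hleft : ∫ s in 0..τ, |rlKernel α (t - s) - rlKernel α (τ - s)| =
      ∫ s in 0..τ, (rlKernel α (τ - s) - rlKernel α (t - s)) :=
    intervalIntegral.integral_congr_Ioo_of_le hτ fun s hs => by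
      rw [abs_sub_comm, abs_of_nonneg (sub_nonneg.2
        (rlKernel_le_of_le hα hα1 (sub_pos.2 hs.2) (by linarith)))]
  have hright : ∫ s in τ..t, |rlKernel α (t - s) - rlKernel α (τ - s)| =
      ∫ s in τ..t, rlKernel α (t - s) :=
    intervalIntegral.integral_congr_Ioo_of_le hτt fun s hs => by
      rw [rlKernel_of_nonpos (sub_nonpos.2 hs.1.le), sub_zero, abs_of_nonneg (rlKernel_nonneg hα _)]
  have hmono : τ ^ α ≤ t ^ α := rpow_le_rpow hτ hτt hα.le
  rw [← intervalIntegral.integral_add_adjacent_intervals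
      (intervalIntegrable_abs_rlKernel_sub_sub hα t τ 0 τ)
      (intervalIntegrable_abs_rlKernel_sub_sub hα t τ τ t), hleft, hright,
    intervalIntegral.integral_sub (intervalIntegrable_rlKernel_sub hα τ 0 τ)
      (intervalIntegrable_rlKernel_sub hα t 0 τ), integral_rlKernel_sub hα hτ le_rfl,
    integral_rlKernel_sub hα (hτ.trans hτt) hτt, integral_rlKernel_sub hα hτt le_rfl]
  simp only [sub_self, sub_zero, zero_rpow hα.ne']
  rw [← sub_div, ← add_div, div_mul_eq_mul_div]
  gcongr
  linarith

lemma norm_RLint_sub_RLint_le_of_le (hα : 0 < α) (hα1 : α ≤ 1)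
    (hφ : AEStronglyMeasurable φ (volume.restrict (Icc 0 T))) (hc0 : 0 ≤ c)
    (hc : ∀ᵐ s ∂volume.restrict (Icc 0 T), ‖φ s‖ ≤ c) {τ : ℝ} (hτ : 0 ≤ τ) (hτt : τ ≤ t)
    (ht : t ≤ T) :
    ‖RLint α φ t - RLint α φ τ‖ ≤ 2 * c / Gamma (α + 1) * (t - τ) ^ α := by
  have ht0 := hτ.trans hτt
  rw [RLint_eq_integral_rlKernel ht0 le_rfl, RLint_eq_integral_rlKernel hτ hτt,
    ← intervalIntegral.integral_sub (intervalIntegrable_rlKernel_sub_smul hα hφ hc t ⟨ht0, ht⟩)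
      (intervalIntegrable_rlKernel_sub_smul hα hφ hc τ ⟨ht0, ht⟩)]
  simp only [← sub_smul]
  calc ‖∫ s in 0..t, (rlKernel α (t - s) - rlKernel α (τ - s)) • φ s‖
      ≤ ∫ s in 0..t, |rlKernel α (t - s) - rlKernel α (τ - s)| * c := by
        refine intervalIntegral.norm_integral_le_of_norm_le ht0 ?_
          ((intervalIntegrable_abs_rlKernel_sub_sub hα t τ 0 t).mul_const c)
        filter_upwards [ae_Ioc_of_ae_restrict_Icc hc le_rfl ht] with s hs hst
        rw [norm_smul, Real.norm_eq_abs]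
        exact mul_le_mul_of_nonneg_left (hs hst) (abs_nonneg _)
    _ ≤ 2 / Gamma (α + 1) * (t - τ) ^ α * c := by
        rw [intervalIntegral.integral_mul_const]
        gcongr
        exact integral_abs_rlKernel_sub_sub_le hα hα1 hτ hτt
    _ = 2 * c / Gamma (α + 1) * (t - τ) ^ α := by ring

theorem norm_RLint_sub_RLint_le (hα : 0 < α) (hα1 : α ≤ 1)
    (hφ : AEStronglyMeasurable φ (volume.restrict (Icc 0 T))) (hc0 : 0 ≤ c)
    (hc : ∀ᵐ s ∂volume.restrict (Icc 0 T), ‖φ s‖ ≤ c) {τ : ℝ} (ht : t ∈ Icc 0 T)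
    (hτ : τ ∈ Icc 0 T) :
    ‖RLint α φ t - RLint α φ τ‖ ≤ 2 * c / Gamma (α + 1) * |t - τ| ^ α := by
  rcases le_total τ t with h | h
  · rw [abs_of_nonneg (sub_nonneg.2 h)]
    exact norm_RLint_sub_RLint_le_of_le hα hα1 hφ hc0 hc hτ.1 h ht.2
  · rw [norm_sub_rev, abs_sub_comm, abs_of_nonneg (sub_nonneg.2 h)]
    exact norm_RLint_sub_RLint_le_of_le hα hα1 hφ hc0 hc ht.1 h hτ.2

lemma continuousOn_RLint (hα : 0 < α) (hα1 : α ≤ 1)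
    (hφ : AEStronglyMeasurable φ (volume.restrict (Icc 0 T)))
    (hc : ∀ᵐ s ∂volume.restrict (Icc 0 T), ‖φ s‖ ≤ c) :
    ContinuousOn (RLint α φ) (Icc 0 T) := by
  have hc' : ∀ᵐ s ∂volume.restrict (Icc 0 T), ‖φ s‖ ≤ |c| :=
    hc.mono fun s hs => hs.trans (le_abs_self c)
  intro τ hτ
  rw [ContinuousWithinAt, tendsto_iff_norm_sub_tendsto_zero]
  refine squeeze_zero' (.of_forall fun _ => norm_nonneg _)
    (eventually_nhdsWithin_of_forall fun t ht =>
      norm_RLint_sub_RLint_le hα hα1 hφ (abs_nonneg c) hc' ht hτ) ?_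
  have hmodulus : ContinuousAt (fun t => 2 * |c| / Gamma (α + 1) * |t - τ| ^ α) τ :=
    continuousAt_const.mul (ContinuousAt.rpow_const (by fun_prop) (Or.inr hα.le))
  simpa [zero_rpow hα.ne'] using hmodulus.tendsto.mono_left nhdsWithin_le_nhds

end RiemannLiouville

section Caputo

variable {E : Type*} [NormedAddCommGroup E] [NormedSpace ℝ E]
variable {α c t T : ℝ} {φ x y : ℝ → E}

lemma RLderiv_eq_deriv_RLint (α : ℝ) (x : ℝ → E) : RLderiv α x = deriv (RLint (1 - α) x) := by
  ext1 t
  change _ = deriv (fun s => RLint (1 - α) x s) t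
  simp only [RLderiv, RLint, sub_sub_cancel_left]

lemma RLderiv_congr (h : EqOn x y (Icc 0 T)) (ht : t ∈ Ioo 0 T) :
    RLderiv α x t = RLderiv α y t := by
  rw [RLderiv_eq_deriv_RLint, RLderiv_eq_deriv_RLint]
  refine Filter.EventuallyEq.deriv_eq ?_
  filter_upwards [Ioo_mem_nhds ht.1 ht.2] with s hs
  exact RLint_congr hs.1.le (h.mono (Icc_subset_Icc_right hs.2.le))

variable [CompleteSpace E]

theorem RLderiv_RLint_ae_eq (hα : α ∈ Ioo 0 1) (hT : 0 ≤ T)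
    (hφ : AEStronglyMeasurable φ (volume.restrict (Icc 0 T)))
    (hc : ∀ᵐ s ∂volume.restrict (Icc 0 T), ‖φ s‖ ≤ c) :
    ∀ᵐ t ∂volume.restrict (Icc 0 T), RLderiv α (RLint α φ) t = φ t := by
  have hprimitive : ∀ t ∈ Icc 0 T, RLint (1 - α) (RLint α φ) t = ∫ s in 0..t, φ s := by
    intro t ht
    have hint := intervalIntegrable_rlKernel_sub_smul one_pos hφ hc t ht
    have hsub : Ioc 0 t ⊆ Icc 0 T := Ioc_subset_Icc_self.trans (Icc_subset_Icc_right ht.2)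
    rw [intervalIntegrable_iff_integrableOn_Ioc_of_le ht.1, ← add_sub_cancel α 1] at hint
    rw [RLint_RLint hα.1 (sub_pos.2 hα.2) ht.1 (hφ.mono_set hsub) hint, add_sub_cancel,
      RLint_one]
  rw [← restrict_Ioo_eq_restrict_Icc, ae_restrict_iff' measurableSet_Ioo]
  have hint : IntegrableOn φ (uIcc 0 T) := by
    rw [uIcc_of_le hT]
    exact .of_bound measure_Icc_lt_top hφ c hc
  filter_upwards [hint.intervalIntegrable.ae_hasDerivAt_integral] with t hderiv ht
  rw [RLderiv_eq_deriv_RLint]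
  refine ((hderiv (Icc_subset_uIcc (Ioo_subset_Icc_self ht)) 0
    left_mem_uIcc).congr_of_eventuallyEq ?_).deriv
  filter_upwards [Ioo_mem_nhds ht.1 ht.2] with s hs
  exact hprimitive s (Ioo_subset_Icc_self hs)

theorem capDeriv_ae_eq_of_eq_add_RLint (hα : α ∈ Ioo 0 1) (hT : 0 ≤ T) {x₀ : E}
    (hφ : AEStronglyMeasurable φ (volume.restrict (Icc 0 T)))
    (hc : ∀ᵐ s ∂volume.restrict (Icc 0 T), ‖φ s‖ ≤ c)
    (hx : ∀ t ∈ Icc 0 T, x t = x₀ + RLint α φ t) :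
    ∀ᵐ t ∂volume.restrict (Icc 0 T), CapDeriv α x t = φ t := by
  have hx0 : x 0 = x₀ := by rw [hx 0 (left_mem_Icc.2 hT), RLint_zero, add_zero]
  have hIoo := ae_restrict_mem (μ := volume) (measurableSet_Ioo (a := 0) (b := T))
  rw [restrict_Ioo_eq_restrict_Icc] at hIoo
  filter_upwards [RLderiv_RLint_ae_eq hα hT hφ hc, hIoo] with t hderiv ht
  rw [CapDeriv, RLderiv_congr (fun s hs => ?_) ht, hderiv]
  rw [hx s hs, hx0, add_sub_cancel_left]

end Caputo

section Gronwall

variable {α k A L T : ℝ}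

lemma exists_pos_mul_rpow_neg_le_half (hα : 0 < α) (c : ℝ) : ∃ k > 0, c * k ^ (-α) ≤ 1 / 2 := by
  have hlim : Filter.Tendsto (fun k : ℝ => c * k ^ (-α)) Filter.atTop (nhds 0) := by
    simpa using (tendsto_rpow_neg_atTop hα).const_mul c
  obtain ⟨k, hck, hk⟩ := ((hlim.eventually_le_const one_half_pos).and
    (Filter.eventually_gt_atTop 0)).exists
  exact ⟨k, hk, hck⟩

-- The rate `k` makes `L • I^α` a `1/2`-contraction for the norm `sup_t exp (-k t) |w t|`, so a
-- maximum point of `exp (-k t) w t` bounds itself.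
theorem le_two_mul_exp_of_le_add_RLint (hα : 0 < α) (hk : 0 < k) (hL : 0 ≤ L)
    (hLk : L * k ^ (-α) ≤ 1 / 2) {w : ℝ → ℝ} (hw : ContinuousOn w (Icc 0 T))
    (hw0 : ∀ t ∈ Icc 0 T, 0 ≤ w t) (h : ∀ t ∈ Icc 0 T, w t ≤ A + L * RLint α w t) {t : ℝ}
    (ht : t ∈ Icc 0 T) : w t ≤ 2 * A * exp (k * t) := by
  have h0 : 0 ∈ Icc 0 T := left_mem_Icc.2 (ht.1.trans ht.2)
  have hA : 0 ≤ A := by simpa [RLint_zero] using (hw0 0 h0).trans (h 0 h0)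
  obtain ⟨τ, hτ, hmax⟩ := isCompact_Icc.exists_isMaxOn ⟨t, ht⟩
    (f := fun s => w s * exp (-(k * s))) (hw.mul (by fun_prop))
  set M := w τ * exp (-(k * τ)) with hM
  have hM0 : 0 ≤ M := mul_nonneg (hw0 τ hτ) (exp_pos _).le
  have hwM : ∀ s ∈ Icc 0 T, w s ≤ M * exp (k * s) := fun s hs => by
    have hs' : w s * exp (-(k * s)) ≤ M := hmax hs
    rwa [exp_neg, ← div_eq_mul_inv, div_le_iff₀ (exp_pos _)] at hs'
  have hRL : RLint α w τ ≤ M * k ^ (-α) * exp (k * τ) := by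
    refine (Real.le_norm_self _).trans (norm_RLint_le_of_norm_le_exp hα hk hM0 hτ ?_)
    filter_upwards [ae_restrict_mem measurableSet_Icc] with s hs
    rw [Real.norm_of_nonneg (hw0 s hs)]
    exact hwM s hs
  have hM2 : M * exp (k * τ) ≤ (A + M / 2) * exp (k * τ) := by
    calc M * exp (k * τ) = w τ := by rw [hM, exp_neg, inv_mul_cancel_right₀ (exp_pos _).ne']
      _ ≤ A * 1 + L * (M * k ^ (-α) * exp (k * τ)) := by
        rw [mul_one]
        exact (h τ hτ).trans (by gcongr)
      _ = A * 1 + (L * k ^ (-α)) * (M * exp (k * τ)) := by ring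
      _ ≤ A * exp (k * τ) + 1 / 2 * (M * exp (k * τ)) := by
        gcongr
        exact one_le_exp (mul_nonneg hk.le hτ.1)
      _ = (A + M / 2) * exp (k * τ) := by ring
  have hMA : M ≤ 2 * A := by linarith [le_of_mul_le_mul_right hM2 (exp_pos _)]
  exact (hwM t ht).trans (by gcongr)

end Gronwall

section WeightedContraction

variable {X E : Type*} [TopologicalSpace X] [CompactSpace X] [T2Space X]
  [NormedAddCommGroup E] [NormedSpace ℝ E] [CompleteSpace E]

theorem exists_fixedPoint_of_weighted_contraction {w : C(X, ℝ)} (hw : ∀ t, 0 < w t)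
    {S : Set C(X, E)} (hS : IsClosed S) (hne : S.Nonempty) {F : C(X, E) → C(X, E)}
    (hF : MapsTo F S S) {K : NNReal} (hK : K < 1)
    (hcontr : ∀ x ∈ S, ∀ y ∈ S, ∀ c, 0 ≤ c → (∀ t, ‖x t - y t‖ ≤ c * w t) →
      ∀ t, ‖F x t - F y t‖ ≤ K * c * w t) :
    ∃ x ∈ S, F x = x := by
  let w' : C(X, ℝ) := ⟨fun t => (w t)⁻¹, w.continuous.inv₀ fun t => (hw t).ne'⟩
  have hww' (x : C(X, E)) : w • w' • x = x := by
    ext t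
    exact smul_inv_smul₀ (hw t).ne' (x t)
  -- Conjugation by multiplication with `w` turns the weighted norm into the supremum norm.
  have hsmul : Continuous fun x : C(X, E) => w • x :=
    ContinuousMap.continuous_of_continuous_uncurry _
      ((w.continuous.comp continuous_snd).smul continuous_eval)
  let G (x : C(X, E)) : C(X, E) := w' • F (w • x)
  let S' : Set C(X, E) := {x | w • x ∈ S}
  have hS' : IsComplete S' := (hS.preimage hsmul).isComplete
  have hG : MapsTo G S' S' := fun x hx => by
    change w • w' • F (w • x) ∈ S
    rw [hww']
    exact hF hx
  have hGcontr : ContractingWith K (hG.restrict G S' S') := by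
    refine ⟨hK, LipschitzWith.of_dist_le_mul fun x y => ?_⟩
    refine (ContinuousMap.dist_le (by positivity)).2 fun t => ?_
    have hxy : ∀ t, ‖(w • x.1) t - (w • y.1) t‖ ≤ dist x y * w t := fun t => by
      change ‖w t • x.1 t - w t • y.1 t‖ ≤ _
      rw [← smul_sub, norm_smul, Real.norm_of_nonneg (hw t).le, mul_comm, ← dist_eq_norm]
      exact mul_le_mul_of_nonneg_right (ContinuousMap.dist_apply_le_dist t) (hw t).le
    change dist ((w t)⁻¹ • F (w • x.1) t) ((w t)⁻¹ • F (w • y.1) t) ≤ _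
    rw [dist_eq_norm, ← smul_sub, norm_smul, Real.norm_of_nonneg (inv_pos.2 (hw t)).le,
      inv_mul_le_iff₀' (hw t)]
    exact hcontr _ x.2 _ y.2 _ dist_nonneg hxy t
  obtain ⟨z, hz⟩ := hne
  have hzS' : w' • z ∈ S' := by
    change w • w' • z ∈ S
    rwa [hww']
  obtain ⟨x, hxS, hx, -⟩ := hGcontr.exists_fixedPoint' hS' hG hzS' (edist_ne_top _ _)
  refine ⟨w • x, hxS, ?_⟩
  rw [← hww' (F (w • x))]
  exact congrArg (w • ·) hx

end WeightedContraction

/-- `f` has linear growth in the state with constant `c`, for almost every time in `[0, T]`. -/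
def HasLinearGrowth {E : Type*} [NormedAddCommGroup E] (T c : ℝ) (f : ℝ → E → E) : Prop :=
  ∀ᵐ t ∂volume.restrict (Icc 0 T), ∀ z, ‖f t z‖ ≤ (1 + ‖z‖) * c

/-- `f` is Lipschitz in the state on every ball, with a constant that serves almost every time in
`[0, T]`. -/
def IsLipschitzOnBalls {E : Type*} [NormedAddCommGroup E] (T : ℝ) (f : ℝ → E → E) : Prop :=
  ∀ r > 0, ∃ L > 0, ∀ᵐ t ∂volume.restrict (Icc 0 T), ∀ z w, ‖z‖ ≤ r → ‖w‖ ≤ r →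
    ‖f t z - f t w‖ ≤ L * ‖z - w‖

/-- `x` solves `(^C D^α x)(t) = f(t, x(t))` for almost every `t ∈ [0, T]`, within the class
`{x₀} + I^α(L^∞)`. This is `IsCaputoSol` with an arbitrary normed space as state space;
`IsCtrlSol α T g x₀ u v` is the case `f t z = g t z (u t) (v t)`. -/
def IsCaputoSolution {E : Type*} [NormedAddCommGroup E] [NormedSpace ℝ E] [MeasurableSpace E]
    (α T : ℝ) (f : ℝ → E → E) (x₀ : E) (x : ℝ → E) : Prop :=
  (∃ φ : ℝ → E, Measurable φ ∧
    (∃ C : ℝ, ∀ᵐ t ∂volume.restrict (Icc 0 T), ‖φ t‖ ≤ C) ∧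
    ∀ t ∈ Icc 0 T, x t = x₀ + RLint α φ t) ∧
  ∀ᵐ t ∂volume.restrict (Icc 0 T), CapDeriv α x t = f t (x t)

section CauchyProblem

variable {E : Type*} [NormedAddCommGroup E] [NormedSpace ℝ E]
  [SecondCountableTopology E] [MeasurableSpace E] [BorelSpace E]
variable {α c k r t T : ℝ} {f : ℝ → E → E} {x₀ : E} {x y : ℝ → E}

lemma IsCaputoSolution.continuousOn (hα : α ∈ Ioo 0 1) (hx : IsCaputoSolution α T f x₀ x) :
    ContinuousOn x (Icc 0 T) := by
  obtain ⟨⟨φ, hφ, ⟨C, hC⟩, hxφ⟩, -⟩ := hx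
  exact (continuousOn_const.add
    (continuousOn_RLint hα.1 hα.2.le hφ.aestronglyMeasurable hC)).congr hxφ

variable [CompleteSpace E]

theorem isCaputoSolution_iff (hα : α ∈ Ioo 0 1) (hT : 0 ≤ T) :
    IsCaputoSolution α T f x₀ x ↔ ∃ φ : ℝ → E, Measurable φ ∧
      (∃ C : ℝ, ∀ᵐ t ∂volume.restrict (Icc 0 T), ‖φ t‖ ≤ C) ∧
      (∀ t ∈ Icc 0 T, x t = x₀ + RLint α φ t) ∧
      ∀ᵐ t ∂volume.restrict (Icc 0 T), φ t = f t (x t) := by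
  constructor
  · rintro ⟨⟨φ, hφ, ⟨C, hC⟩, hx⟩, hderiv⟩
    refine ⟨φ, hφ, ⟨C, hC⟩, hx, ?_⟩
    filter_upwards [hderiv,
      capDeriv_ae_eq_of_eq_add_RLint hα hT hφ.aestronglyMeasurable hC hx] with t htf htφ
    exact htφ.symm.trans htf
  · rintro ⟨φ, hφ, ⟨C, hC⟩, hx, hφf⟩
    refine ⟨⟨φ, hφ, ⟨C, hC⟩, hx⟩, ?_⟩
    filter_upwards [hφf,
      capDeriv_ae_eq_of_eq_add_RLint hα hT hφ.aestronglyMeasurable hC hx] with t htf htφ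
    exact htφ.trans htf

theorem IsCaputoSolution.one_add_norm_le (hα : α ∈ Ioo 0 1) (hk : 0 < k) (hc : 0 ≤ c)
    (hck : c * k ^ (-α) ≤ 1 / 2) (hf : HasLinearGrowth T c f)
    (hx : IsCaputoSolution α T f x₀ x) (ht : t ∈ Icc 0 T) :
    1 + ‖x t‖ ≤ 2 * (1 + ‖x₀‖) * exp (k * t) := by
  have hcont : ContinuousOn (fun s => 1 + ‖x s‖) (Icc 0 T) :=
    continuousOn_const.add (hx.continuousOn hα).norm
  refine le_two_mul_exp_of_le_add_RLint hα.1 hk hc hck hcont (fun _ _ => by positivity) ?_ ht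
  obtain ⟨φ, -, -, hxφ, hφf⟩ := (isCaputoSolution_iff hα (ht.1.trans ht.2)).1 hx
  intro s hs
  have hRL : ‖RLint α φ s‖ ≤ c * RLint α (fun τ => 1 + ‖x τ‖) s := by
    rw [← RLint_const_mul]
    refine norm_RLint_le hα.1 hs
      (intervalIntegrable_rlKernel_sub_mul hα.1 (continuousOn_const.mul hcont) hs) ?_
    filter_upwards [hφf, hf] with τ hτ hgrowth
    rw [hτ, mul_comm]
    exact hgrowth _
  calc 1 + ‖x s‖ ≤ 1 + (‖x₀‖ + ‖RLint α φ s‖) := by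
        rw [hxφ s hs]
        gcongr
        exact norm_add_le _ _
    _ ≤ 1 + ‖x₀‖ + c * RLint α (fun τ => 1 + ‖x τ‖) s := by linarith

theorem IsCaputoSolution.norm_sub_le (hα : α ∈ Ioo 0 1) (hc : 0 ≤ c) (hr : 0 ≤ r)
    (hf : HasLinearGrowth T c f) (hx : IsCaputoSolution α T f x₀ x)
    (hxr : ∀ t ∈ Icc 0 T, ‖x t‖ ≤ r) {τ : ℝ} (ht : t ∈ Icc 0 T) (hτ : τ ∈ Icc 0 T) :
    ‖x t - x τ‖ ≤ 2 * ((1 + r) * c) / Gamma (α + 1) * |t - τ| ^ α := by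
  obtain ⟨φ, hφ, -, hxφ, hφf⟩ := (isCaputoSolution_iff hα (ht.1.trans ht.2)).1 hx
  have hφr : ∀ᵐ s ∂volume.restrict (Icc 0 T), ‖φ s‖ ≤ (1 + r) * c := by
    filter_upwards [hφf, hf, ae_restrict_mem measurableSet_Icc] with s hs hgrowth hsT
    rw [hs]
    exact (hgrowth _).trans (by gcongr; exact hxr s hsT)
  rw [hxφ t ht, hxφ τ hτ, add_sub_add_left_eq_sub]
  exact norm_RLint_sub_RLint_le hα.1 hα.2.le hφ.aestronglyMeasurable (by positivity) hφr ht hτ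

theorem exists_uniform_bounds_isCaputoSolution {R₀ : ℝ} (hα : α ∈ Ioo 0 1) (hc : 0 < c)
    (hR₀ : 0 ≤ R₀) (T : ℝ) :
    ∃ R H : ℝ, 0 < R ∧ 0 < H ∧ ∀ (f : ℝ → E → E) (x₀ : E) (x : ℝ → E),
      HasLinearGrowth T c f → ‖x₀‖ ≤ R₀ → IsCaputoSolution α T f x₀ x →
      ∀ t ∈ Icc 0 T, ∀ τ ∈ Icc 0 T, ‖x t‖ ≤ R ∧ ‖x t - x τ‖ ≤ H * |t - τ| ^ α := by
  obtain ⟨k, hk, hck⟩ := exists_pos_mul_rpow_neg_le_half hα.1 c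
  have hΓ : 0 < Gamma (α + 1) := Gamma_pos_of_pos (by linarith [hα.1])
  set R := 2 * (1 + R₀) * exp (k * T)
  have hR : 0 < R := by positivity
  refine ⟨R, 2 * ((1 + R) * c) / Gamma (α + 1), hR, by positivity,
    fun f x₀ x hf hx₀ hx t ht τ hτ => ?_⟩
  have hbound : ∀ s ∈ Icc 0 T, ‖x s‖ ≤ R := fun s hs =>
    calc ‖x s‖ ≤ 1 + ‖x s‖ := by linarith
      _ ≤ 2 * (1 + ‖x₀‖) * exp (k * s) := hx.one_add_norm_le hα hk hc.le hck hf hs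
      _ ≤ 2 * (1 + R₀) * exp (k * T) := by
          gcongr
          exact hs.2
  exact ⟨hbound t ht, hx.norm_sub_le hα hc.le hR.le hf hbound ht hτ⟩

theorem IsCaputoSolution.eqOn (hα : α ∈ Ioo 0 1) (hT : 0 ≤ T) (hf : IsLipschitzOnBalls T f)
    (hx : IsCaputoSolution α T f x₀ x) (hy : IsCaputoSolution α T f x₀ y) :
    EqOn x y (Icc 0 T) := by
  obtain ⟨rx, hrx⟩ := isCompact_Icc.exists_bound_of_continuousOn (hx.continuousOn hα)
  obtain ⟨ry, hry⟩ := isCompact_Icc.exists_bound_of_continuousOn (hy.continuousOn hα)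
  obtain ⟨L, hL, hLip⟩ := hf (max 1 (max rx ry)) (by positivity)
  obtain ⟨k, hk, hLk⟩ := exists_pos_mul_rpow_neg_le_half hα.1 L
  obtain ⟨φ, hφ, ⟨C, hC⟩, hxφ, hφf⟩ := (isCaputoSolution_iff hα hT).1 hx
  obtain ⟨ψ, hψ, ⟨D, hD⟩, hyψ, hψf⟩ := (isCaputoSolution_iff hα hT).1 hy
  have hcont : ContinuousOn (fun s => ‖x s - y s‖) (Icc 0 T) :=
    ((hx.continuousOn hα).sub (hy.continuousOn hα)).norm
  have hGronwall : ∀ s ∈ Icc 0 T, ‖x s - y s‖ ≤ 0 + L * RLint α (fun τ => ‖x τ - y τ‖) s := by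
    intro s hs
    rw [zero_add, hxφ s hs, hyψ s hs, add_sub_add_left_eq_sub, ← RLint_const_mul, ← RLint_sub hs.1
      (intervalIntegrable_rlKernel_sub_smul hα.1 hφ.aestronglyMeasurable hC s hs)
      (intervalIntegrable_rlKernel_sub_smul hα.1 hψ.aestronglyMeasurable hD s hs)]
    refine norm_RLint_le hα.1 hs
      (intervalIntegrable_rlKernel_sub_mul hα.1 (continuousOn_const.mul hcont) hs) ?_
    filter_upwards [hφf, hψf, hLip, ae_restrict_mem measurableSet_Icc] with τ hφτ hψτ hτ hτT
    rw [hφτ, hψτ]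
    exact hτ _ _ ((hrx τ hτT).trans (by simp)) ((hry τ hτT).trans (by simp))
  intro t ht
  have := le_two_mul_exp_of_le_add_RLint hα.1 hk hL.le hLk hcont (fun _ _ => norm_nonneg _)
    hGronwall ht
  rwa [mul_zero, zero_mul, norm_le_zero_iff, sub_eq_zero] at this

end CauchyProblem

/-- The closed set of continuous paths on `[0, T]` whose size `1 + ‖x t‖` grows at most like
`A * exp (k * t)`. For suitable `A` and `k` the Picard map leaves it invariant. -/
def expGrowthSet (E : Type*) [NormedAddCommGroup E] (T A k : ℝ) : Set C(Icc 0 T, E) :=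
  {x | ∀ t : Icc 0 T, 1 + ‖x t‖ ≤ A * exp (k * t)}

section Picard

variable {E : Type*} [NormedAddCommGroup E] {α A c k t T : ℝ} {f : ℝ → E → E} {x₀ : E}

lemma HasLinearGrowth.norm_comp_IccExtend_le (hT : 0 ≤ T) (hc : 0 ≤ c)
    (hf : HasLinearGrowth T c f) (x : C(Icc 0 T, E)) :
    ∀ᵐ τ ∂volume.restrict (Icc 0 T), ‖f τ (IccExtend hT x τ)‖ ≤ (1 + ‖x‖) * c := by
  filter_upwards [hf] with τ hτ
  refine (hτ _).trans ?_
  gcongr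
  exact x.norm_coe_le_norm _

lemma measurable_comp_IccExtend [MeasurableSpace E] [BorelSpace E] (hT : 0 ≤ T)
    (hf : Measurable (Function.uncurry f)) (x : C(Icc 0 T, E)) :
    Measurable fun τ => f τ (IccExtend hT x τ) :=
  hf.comp (measurable_id.prodMk (x.continuous.Icc_extend' (h := hT)).measurable)

lemma isClosed_expGrowthSet (E : Type*) [NormedAddCommGroup E] (T A k : ℝ) :
    IsClosed (expGrowthSet E T A k) := by
  simp only [expGrowthSet, ofPred_forall]
  exact isClosed_iInter fun t => isClosed_le (by fun_prop) continuous_const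

lemma const_mem_expGrowthSet (hA : 1 + ‖x₀‖ ≤ A) (hk : 0 ≤ k) :
    ContinuousMap.const _ x₀ ∈ expGrowthSet E T A k := fun t =>
  hA.trans (le_mul_of_one_le_right (by linarith [norm_nonneg x₀])
    (one_le_exp (mul_nonneg hk t.2.1)))

lemma norm_le_of_mem_expGrowthSet (hA : 0 ≤ A) (hk : 0 ≤ k) {x : C(Icc 0 T, E)}
    (hx : x ∈ expGrowthSet E T A k) : ‖x‖ ≤ A * exp (k * T) := by
  refine (ContinuousMap.norm_le _ (by positivity)).2 fun t => ?_
  calc ‖x t‖ ≤ 1 + ‖x t‖ := by linarith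
    _ ≤ A * exp (k * t) := hx t
    _ ≤ A * exp (k * T) := by
        gcongr
        exact t.2.2

variable [NormedSpace ℝ E]

lemma one_add_norm_add_RLint_le (hα : 0 < α) (hk : 0 < k) (hck : c * k ^ (-α) ≤ 1 / 2)
    (hc : 0 ≤ c) (hf : HasLinearGrowth T c f) {x : ℝ → E}
    (hx : ∀ t ∈ Icc 0 T, 1 + ‖x t‖ ≤ 2 * (1 + ‖x₀‖) * exp (k * t)) (ht : t ∈ Icc 0 T) :
    1 + ‖x₀ + RLint α (fun τ => f τ (x τ)) t‖ ≤ 2 * (1 + ‖x₀‖) * exp (k * t) := by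
  have hbound : ∀ᵐ τ ∂volume.restrict (Icc 0 T),
      ‖f τ (x τ)‖ ≤ 2 * (1 + ‖x₀‖) * c * exp (k * τ) := by
    filter_upwards [hf, ae_restrict_mem measurableSet_Icc] with τ hτ hτT
    calc ‖f τ (x τ)‖ ≤ (1 + ‖x τ‖) * c := hτ _
      _ ≤ 2 * (1 + ‖x₀‖) * exp (k * τ) * c := by
          gcongr
          exact hx τ hτT
      _ = 2 * (1 + ‖x₀‖) * c * exp (k * τ) := by ring
  calc 1 + ‖x₀ + RLint α (fun τ => f τ (x τ)) t‖
      ≤ (1 + ‖x₀‖) * 1 + ‖RLint α (fun τ => f τ (x τ)) t‖ := by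
        linarith [norm_add_le x₀ (RLint α (fun τ => f τ (x τ)) t)]
    _ ≤ (1 + ‖x₀‖) * exp (k * t) + 2 * (1 + ‖x₀‖) * c * k ^ (-α) * exp (k * t) := by
        gcongr
        · exact one_le_exp (mul_nonneg hk.le ht.1)
        · exact norm_RLint_le_of_norm_le_exp hα hk (by positivity) ht hbound
    _ = (1 + ‖x₀‖) * (1 + 2 * (c * k ^ (-α))) * exp (k * t) := by ring
    _ ≤ (1 + ‖x₀‖) * (1 + 2 * (1 / 2)) * exp (k * t) := by gcongr
    _ = 2 * (1 + ‖x₀‖) * exp (k * t) := by ring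

variable [SecondCountableTopology E] [MeasurableSpace E] [BorelSpace E]

lemma exists_picardMap (hα : α ∈ Ioo 0 1) (hT : 0 ≤ T) (hc : 0 ≤ c)
    (hf : Measurable (Function.uncurry f)) (hgrowth : HasLinearGrowth T c f) (x₀ : E) :
    ∃ F : C(Icc 0 T, E) → C(Icc 0 T, E), ∀ x t,
      F x t = x₀ + RLint α (fun τ => f τ (IccExtend hT x τ)) t := by
  have hcont (x : C(Icc 0 T, E)) :
      Continuous fun t : Icc 0 T => x₀ + RLint α (fun τ => f τ (IccExtend hT x τ)) t :=
    continuous_const.add (continuousOn_RLint hα.1 hα.2.le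
      (measurable_comp_IccExtend hT hf x).aestronglyMeasurable
      (hgrowth.norm_comp_IccExtend_le hT hc x)).domRestrict
  exact ⟨fun x => ⟨_, hcont x⟩, fun _ _ => rfl⟩

lemma norm_RLint_comp_IccExtend_sub_le {L m r : ℝ} (hα : 0 < α) (hT : 0 ≤ T) (hk : 0 < k)
    (hc : 0 ≤ c) (hL : 0 ≤ L) (hm : 0 ≤ m) (hf : Measurable (Function.uncurry f))
    (hgrowth : HasLinearGrowth T c f)
    (hlip : ∀ᵐ τ ∂volume.restrict (Icc 0 T), ∀ z w, ‖z‖ ≤ r → ‖w‖ ≤ r →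
      ‖f τ z - f τ w‖ ≤ L * ‖z - w‖)
    {x y : C(Icc 0 T, E)} (hx : ‖x‖ ≤ r) (hy : ‖y‖ ≤ r)
    (hxy : ∀ τ : Icc 0 T, ‖x τ - y τ‖ ≤ m * exp (k * τ)) (ht : t ∈ Icc 0 T) :
    ‖RLint α (fun τ => f τ (IccExtend hT x τ)) t - RLint α (fun τ => f τ (IccExtend hT y τ)) t‖ ≤
      L * m * k ^ (-α) * exp (k * t) := by
  refine norm_RLint_sub_RLint_le_of_norm_sub_le_exp hα hk (by positivity)
    (measurable_comp_IccExtend hT hf x).aestronglyMeasurable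
    (hgrowth.norm_comp_IccExtend_le hT hc x)
    (measurable_comp_IccExtend hT hf y).aestronglyMeasurable
    (hgrowth.norm_comp_IccExtend_le hT hc y) ?_ ht
  filter_upwards [hlip, ae_restrict_mem measurableSet_Icc] with τ hτ hτT
  rw [IccExtend_of_mem hT x hτT, IccExtend_of_mem hT y hτT, mul_assoc]
  calc ‖f τ (x ⟨τ, hτT⟩) - f τ (y ⟨τ, hτT⟩)‖
      ≤ L * ‖x ⟨τ, hτT⟩ - y ⟨τ, hτT⟩‖ :=
        hτ _ _ ((x.norm_coe_le_norm _).trans hx) ((y.norm_coe_le_norm _).trans hy)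
    _ ≤ L * (m * exp (k * τ)) := mul_le_mul_of_nonneg_left (hxy _) hL

theorem exists_isCaputoSolution [CompleteSpace E] (hα : α ∈ Ioo 0 1) (hT : 0 ≤ T) (hc : 0 ≤ c)
    (hf : Measurable (Function.uncurry f)) (hgrowth : HasLinearGrowth T c f)
    (hlip : IsLipschitzOnBalls T f) (x₀ : E) : ∃ x, IsCaputoSolution α T f x₀ x := by
  obtain ⟨F, hF⟩ := exists_picardMap hα hT hc hf hgrowth x₀
  obtain ⟨k, hk, hck⟩ := exists_pos_mul_rpow_neg_le_half hα.1 c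
  set A := 2 * (1 + ‖x₀‖)
  have hA0 : 0 < A := by positivity
  have hFS : MapsTo F (expGrowthSet E T A k) (expGrowthSet E T A k) := fun x hx t => by
    rw [hF]
    refine one_add_norm_add_RLint_le hα.1 hk hck hc hgrowth (fun τ hτ => ?_) t.2
    rw [IccExtend_of_mem hT x hτ]
    exact hx ⟨τ, hτ⟩
  obtain ⟨L, hL, hLip⟩ := hlip (A * exp (k * T)) (by positivity)
  obtain ⟨l, hl, hLl⟩ := exists_pos_mul_rpow_neg_le_half hα.1 L
  let w : C(Icc 0 T, ℝ) := ⟨fun t => exp (l * t), by fun_prop⟩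
  have hcontr : ∀ x ∈ expGrowthSet E T A k, ∀ y ∈ expGrowthSet E T A k, ∀ m, 0 ≤ m →
      (∀ t, ‖x t - y t‖ ≤ m * w t) → ∀ t, ‖F x t - F y t‖ ≤ (1 / 2 : NNReal) * m * w t := by
    intro x hx y hy m hm hxy t
    rw [hF, hF, add_sub_add_left_eq_sub]
    calc _ ≤ L * m * l ^ (-α) * exp (l * t) :=
          norm_RLint_comp_IccExtend_sub_le hα.1 hT hl hc hL.le hm hf hgrowth hLip
            (norm_le_of_mem_expGrowthSet hA0.le hk.le hx)
            (norm_le_of_mem_expGrowthSet hA0.le hk.le hy) hxy t.2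
      _ = L * l ^ (-α) * m * exp (l * t) := by ring
      _ ≤ 1 / 2 * m * exp (l * t) := by gcongr
      _ = (1 / 2 : NNReal) * m * w t := by push_cast; rfl
  obtain ⟨x, -, hx⟩ := exists_fixedPoint_of_weighted_contraction (w := w) (fun t => exp_pos _)
    (isClosed_expGrowthSet E T A k)
    ⟨_, const_mem_expGrowthSet (x₀ := x₀) (by linarith [norm_nonneg x₀]) hk.le⟩ hFS
    (by norm_num) hcontr
  refine ⟨IccExtend hT x, (isCaputoSolution_iff hα hT).2 ⟨_, measurable_comp_IccExtend hT hf x,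
    ⟨_, hgrowth.norm_comp_IccExtend_le hT hc x⟩, fun t ht => ?_, ae_of_all _ fun _ => rfl⟩⟩
  rw [← hF x ⟨t, ht⟩, hx, IccExtend_of_mem hT x ht]

end Picard

theorem stmt16_general {E U V : Type*} [NormedAddCommGroup E] [NormedSpace ℝ E] [CompleteSpace E]
    [SecondCountableTopology E] [MeasurableSpace E] [BorelSpace E] [MeasurableSpace U]
    [MeasurableSpace V] {α T R₀ c : ℝ} (hα : α ∈ Ioo 0 1) (hT : 0 ≤ T) (hR₀ : 0 ≤ R₀)
    {P : Set U} {Q : Set V} {g : ℝ → E → U → V → E}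
    (hg : Measurable fun p : ℝ × E × U × V => g p.1 p.2.1 p.2.2.1 p.2.2.2)
    (hlip : ∀ r > 0, ∃ L > 0, ∀ t ∈ Icc 0 T, ∀ x y : E, ‖x‖ ≤ r → ‖y‖ ≤ r →
      ∀ u ∈ P, ∀ v ∈ Q, ‖g t x u v - g t y u v‖ ≤ L * ‖x - y‖)
    (hc : 0 < c)
    (hgrowth : ∀ t ∈ Icc 0 T, ∀ x, ∀ u ∈ P, ∀ v ∈ Q, ‖g t x u v‖ ≤ (1 + ‖x‖) * c) :
    (∀ x₀ : E, ∀ u : ℝ → U, Measurable u → (∀ t ∈ Ico 0 T, u t ∈ P) →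
      ∀ v : ℝ → V, Measurable v → (∀ t ∈ Ico 0 T, v t ∈ Q) →
      ∃ x : ℝ → E, IsCaputoSolution α T (fun t z => g t z (u t) (v t)) x₀ x ∧
        ∀ x' : ℝ → E, IsCaputoSolution α T (fun t z => g t z (u t) (v t)) x₀ x' →
          EqOn x' x (Icc 0 T)) ∧
    ∃ R H : ℝ, 0 < R ∧ 0 < H ∧
      ∀ (x₀ : E) (u : ℝ → U) (v : ℝ → V) (x : ℝ → E),
        ‖x₀‖ ≤ R₀ → (∀ t ∈ Ico 0 T, u t ∈ P) → (∀ t ∈ Ico 0 T, v t ∈ Q) →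
        IsCaputoSolution α T (fun t z => g t z (u t) (v t)) x₀ x →
        ∀ t ∈ Icc 0 T, ∀ τ ∈ Icc 0 T,
          ‖x t‖ ≤ R ∧ ‖x t - x τ‖ ≤ H * |t - τ| ^ α := by
  have hcontrols {u : ℝ → U} {v : ℝ → V} (hu : ∀ t ∈ Ico 0 T, u t ∈ P)
      (hv : ∀ t ∈ Ico 0 T, v t ∈ Q) :
      ∀ᵐ t ∂volume.restrict (Icc 0 T), t ∈ Icc 0 T ∧ u t ∈ P ∧ v t ∈ Q := by
    rw [← restrict_Ico_eq_restrict_Icc]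
    filter_upwards [ae_restrict_mem measurableSet_Ico] with t ht
    exact ⟨Ico_subset_Icc_self ht, hu t ht, hv t ht⟩
  have hgrowth' {u : ℝ → U} {v : ℝ → V} (hu : ∀ t ∈ Ico 0 T, u t ∈ P)
      (hv : ∀ t ∈ Ico 0 T, v t ∈ Q) : HasLinearGrowth T c fun t z => g t z (u t) (v t) :=
    (hcontrols hu hv).mono fun t ht z => hgrowth t ht.1 z _ ht.2.1 _ ht.2.2
  obtain ⟨R, H, hR, hH, hbounds⟩ := exists_uniform_bounds_isCaputoSolution (E := E) hα hc hR₀ T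
  refine ⟨fun x₀ u hu huP v hv hvQ => ?_, R, H, hR, hH, fun x₀ u v x hx₀ huP hvQ =>
    hbounds _ x₀ x (hgrowth' huP hvQ) hx₀⟩
  have hlip' : IsLipschitzOnBalls T fun t z => g t z (u t) (v t) := fun r hr => by
    obtain ⟨L, hL, hLip⟩ := hlip r hr
    exact ⟨L, hL, (hcontrols huP hvQ).mono fun t ht z w hz hw =>
      hLip t ht.1 z w hz hw _ ht.2.1 _ ht.2.2⟩
  have hmeas : Measurable (Function.uncurry fun t z => g t z (u t) (v t)) :=
    hg.comp (measurable_fst.prodMk (measurable_snd.prodMk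
      ((hu.comp measurable_fst).prodMk (hv.comp measurable_fst))))
  obtain ⟨x, hx⟩ := exists_isCaputoSolution hα hT hc.le hmeas (hgrowth' huP hvQ) hlip' x₀
  exact ⟨x, hx, fun x' hx' => hx'.eqOn hα hT hlip' hx⟩

theorem stmt16 (α T R₀ : ℝ) (hα : α ∈ Ioo (0:ℝ) 1) (hT : 0 < T) (hR₀ : 0 < R₀)
    (n nu nv : ℕ) (P : Set (Evec nu)) (Q : Set (Evec nv))
    (hP : IsCompact P) (hQ : IsCompact Q) (hPne : P.Nonempty) (hQne : Q.Nonempty)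
    (g : ℝ → Evec n → Evec nu → Evec nv → Evec n)
    (hg1 : Continuous fun p : ℝ × Evec n × Evec nu × Evec nv =>
      g p.1 p.2.1 p.2.2.1 p.2.2.2)
    (hg2 : ∀ r > (0:ℝ), ∃ lam > (0:ℝ), ∀ t ∈ Icc (0:ℝ) T, ∀ x y : Evec n,
      ‖x‖ ≤ r → ‖y‖ ≤ r → ∀ u ∈ P, ∀ v ∈ Q,
        ‖g t x u v - g t y u v‖ ≤ lam * ‖x - y‖)
    (cg : ℝ) (hcg : 0 < cg)
    (hg3 : ∀ t ∈ Icc (0:ℝ) T, ∀ (x : Evec n) (u : Evec nu) (v : Evec nv),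
      ‖g t x u v‖ ≤ (1 + ‖x‖) * cg) :
    (∀ x₀ : Evec n, ‖x₀‖ ≤ R₀ →
      ∀ u : ℝ → Evec nu, Measurable u → (∀ t ∈ Ico (0:ℝ) T, u t ∈ P) →
      ∀ v : ℝ → Evec nv, Measurable v → (∀ t ∈ Ico (0:ℝ) T, v t ∈ Q) →
      ∃ x : ℝ → Evec n, IsCtrlSol α T g x₀ u v x ∧
        ∀ x' : ℝ → Evec n, IsCtrlSol α T g x₀ u v x' → EqOn x' x (Icc (0:ℝ) T)) ∧
    ∃ R H : ℝ, 0 < R ∧ 0 < H ∧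
      ∀ (x₀ : Evec n) (u : ℝ → Evec nu) (v : ℝ → Evec nv) (x : ℝ → Evec n),
        ‖x₀‖ ≤ R₀ → Measurable u → (∀ t ∈ Ico (0:ℝ) T, u t ∈ P) →
        Measurable v → (∀ t ∈ Ico (0:ℝ) T, v t ∈ Q) →
        IsCtrlSol α T g x₀ u v x →
        ∀ t ∈ Icc (0:ℝ) T, ∀ τ ∈ Icc (0:ℝ) T,
          ‖x t‖ ≤ R ∧ ‖x t - x τ‖ ≤ H * |t - τ| ^ α := by
  obtain ⟨hexists, R, H, hR, hH, hbounds⟩ := stmt16_general hα hT.le hR₀.le hg1.measurable hg2 hcg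
    fun t ht x u _ v _ => hg3 t ht x u v
  exact ⟨fun x₀ _ => hexists x₀, R, H, hR, hH, fun x₀ u v x hx₀ _ hu _ hv =>
    hbounds x₀ u v x hx₀ hu hv⟩
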